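/- Let A ∈ ℝ^{n×n}, B ∈ ℝ^{n×m}, C ∈ ℝ^{p×n}, and assume that the generalized unstable subspace X₊(A) is contained in ker C. Let X be the unique symmetric positive semidefinite solution of the Lyapunov equation AᵀX + XA + CᵀC = 0 satisfying X₊(A) ⊆ ker X. Then the transfer function S(s) = C(sI − A)⁻¹B satisfies ‖S‖²_{H₂} = tr(BᵀXB), where ‖S‖²_{H₂} = (1/2π)∫_{−∞}^{+∞} tr(S(−iω)ᵀS(iω)) dω. -/

import Mathlib

open Matrix Filter Topology Function
open scoped Kronecker

noncomputable section

/-- Complexification of a real matrix. -/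
def cplx {α β : Type*} (M : Matrix α β ℝ) : Matrix α β ℂ := M.map Complex.ofReal

/-- Transfer function `S(s) = C (sI - A)⁻¹ B` of the system `ẋ = Ax + Bu, y = Cx`. -/
def transfer {n m p : ℕ} (A : Matrix (Fin n) (Fin n) ℝ) (B : Matrix (Fin n) (Fin m) ℝ)
    (C : Matrix (Fin p) (Fin n) ℝ) (s : ℂ) : Matrix (Fin p) (Fin m) ℂ :=
  cplx C * (s • (1 : Matrix (Fin n) (Fin n) ℂ) - cplx A)⁻¹ * cplx B

/-- Squared H₂-norm: `(1/2π) ∫ tr(S(-iω)ᵀ S(iω)) dω`. -/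
def H2normSq {α β : Type*} [Fintype α] [Fintype β] (S : ℂ → Matrix α β ℂ) : ℝ :=
  (1 / (2 * Real.pi)) *
    ∫ ω : ℝ, ((S (-((ω : ℂ) * Complex.I)))ᵀ * S ((ω : ℂ) * Complex.I)).trace.re

/-- Largest singular value of a complex matrix (its ℓ²-operator norm). -/
def sigmaMax {α β : Type*} [Fintype α] [Fintype β] [DecidableEq β] (M : Matrix α β ℂ) : ℝ :=
  ‖LinearMap.toContinuousLinearMap (Matrix.toEuclideanLin M)‖

/-- Smallest singular value of a complex matrix: `√(λ_min(Mᴴ M))`. -/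
def sigmaMinC {α β : Type*} [Fintype α] [Fintype β] [DecidableEq β] (M : Matrix α β ℂ) : ℝ :=
  Real.sqrt (sInf (spectrum ℝ (Mᴴ * M)))

/-- H∞-norm: `sup_{ω ∈ ℝ} σ_max(S(iω))`. -/
def HinfNorm {α β : Type*} [Fintype α] [Fintype β] [DecidableEq β] (S : ℂ → Matrix α β ℂ) : ℝ :=
  ⨆ ω : ℝ, sigmaMax (S ((ω : ℂ) * Complex.I))

/-- Generalized unstable subspace `X₊(A)`: direct sum of the generalized eigenspaces of (the
complexification of) `A` corresponding to eigenvalues with nonnegative real part. -/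
def unstableSubspace {n : ℕ} (A : Matrix (Fin n) (Fin n) ℝ) : Submodule ℂ (Fin n → ℂ) :=
  ⨆ μ ∈ {μ : ℂ | 0 ≤ μ.re}, Module.End.maxGenEigenspace (Matrix.toLin' (cplx A)) μ

/-- A complex square matrix is Hurwitz if all its eigenvalues have negative real part. -/
def IsHurwitz {n : ℕ} (M : Matrix (Fin n) (Fin n) ℂ) : Prop :=
  ∀ μ ∈ spectrum ℂ M, μ.re < 0

/-- Transfer function `S_λ(s) = λ (sI - A + λB)⁻¹ E` of the auxiliary system. -/
def auxS {n r : ℕ} (A B : Matrix (Fin n) (Fin n) ℝ) (E : Matrix (Fin n) (Fin r) ℝ)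
    (lam : ℝ) (s : ℂ) : Matrix (Fin n) (Fin r) ℂ :=
  (lam : ℂ) • ((s • (1 : Matrix (Fin n) (Fin n) ℂ) - cplx A + (lam : ℂ) • cplx B)⁻¹ * cplx E)

/-- Transfer function `S(s) = (L⊗Iₙ)(sI - I_N⊗A + L⊗B)⁻¹(M⊗E)` of the original network. -/
def netS {N n r m : ℕ} (L : Matrix (Fin N) (Fin N) ℝ) (A B : Matrix (Fin n) (Fin n) ℝ)
    (E : Matrix (Fin n) (Fin r) ℝ) (M : Matrix (Fin N) (Fin m) ℝ) (s : ℂ) :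
    Matrix (Fin N × Fin n) (Fin m × Fin r) ℂ :=
  cplx (L ⊗ₖ (1 : Matrix (Fin n) (Fin n) ℝ)) *
    (s • (1 : Matrix (Fin N × Fin n) (Fin N × Fin n) ℂ) -
      cplx ((1 : Matrix (Fin N) (Fin N) ℝ) ⊗ₖ A - L ⊗ₖ B))⁻¹ *
    cplx (M ⊗ₖ E)

/-- Transfer function `Ŝ(s) = (LP⊗Iₙ)(sI - I_k⊗A + L̂⊗B)⁻¹(M̂⊗E)` of the reduced network. -/
def netShat {N n r m k : ℕ} (L : Matrix (Fin N) (Fin N) ℝ) (P : Matrix (Fin N) (Fin k) ℝ)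
    (Lhat : Matrix (Fin k) (Fin k) ℝ) (Mhat : Matrix (Fin k) (Fin m) ℝ)
    (A B : Matrix (Fin n) (Fin n) ℝ) (E : Matrix (Fin n) (Fin r) ℝ) (s : ℂ) :
    Matrix (Fin N × Fin n) (Fin m × Fin r) ℂ :=
  cplx ((L * P) ⊗ₖ (1 : Matrix (Fin n) (Fin n) ℝ)) *
    (s • (1 : Matrix (Fin k × Fin n) (Fin k × Fin n) ℂ) -
      cplx ((1 : Matrix (Fin k) (Fin k) ℝ) ⊗ₖ A - Lhat ⊗ₖ B))⁻¹ *
    cplx (Mhat ⊗ₖ E)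

/-- Transfer function `S(s) = L (sI + L)⁻¹ M` of the single-integrator network. -/
def singleS {N m : ℕ} (L : Matrix (Fin N) (Fin N) ℝ) (M : Matrix (Fin N) (Fin m) ℝ)
    (s : ℂ) : Matrix (Fin N) (Fin m) ℂ :=
  cplx L * (s • (1 : Matrix (Fin N) (Fin N) ℂ) + cplx L)⁻¹ * cplx M

/-- Transfer function `Ŝ(s) = LP (sI + L̂)⁻¹ M̂` of the reduced single-integrator network. -/
def singleShat {N m k : ℕ} (L : Matrix (Fin N) (Fin N) ℝ) (P : Matrix (Fin N) (Fin k) ℝ)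
    (Lhat : Matrix (Fin k) (Fin k) ℝ) (Mhat : Matrix (Fin k) (Fin m) ℝ) (s : ℂ) :
    Matrix (Fin N) (Fin m) ℂ :=
  cplx (L * P) * (s • (1 : Matrix (Fin k) (Fin k) ℂ) + cplx Lhat)⁻¹ * cplx Mhat

/-- Squared Frobenius norm `‖M‖_F² = tr(MᵀM)`. -/
def frobSq {α β : Type*} [Fintype α] [Fintype β] (M : Matrix α β ℝ) : ℝ := (Mᵀ * M).trace

end


open MeasureTheory

def SymInt (F : ℝ → ℂ) (c : ℂ) : Prop :=
  Integrable (fun ω : ℝ => F ω + F (-ω)) ∧ ∫ ω : ℝ, (F ω + F (-ω)) = 2 * Real.pi * c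

theorem SymInt.add {F G : ℝ → ℂ} {c d : ℂ} (hF : SymInt F c) (hG : SymInt G d) :
    SymInt (fun ω => F ω + G ω) (c + d) := by
  have e : (fun ω : ℝ => F ω + G ω + (F (-ω) + G (-ω)))
      = fun ω => (F ω + F (-ω)) + (G ω + G (-ω)) := by
    funext ω; ring
  refine ⟨?_, ?_⟩
  · rw [e]; exact hF.1.add hG.1
  · rw [e, integral_add hF.1 hG.1, hF.2, hG.2]; ring

theorem SymInt.const_mul {F : ℝ → ℂ} {c : ℂ} (hF : SymInt F c) (a : ℂ) :
    SymInt (fun ω => a * F ω) (a * c) := by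
  have e : (fun ω : ℝ => a * F ω + a * F (-ω)) = fun ω => a * (F ω + F (-ω)) := by
    funext ω; ring
  refine ⟨?_, ?_⟩
  · rw [e]; exact hF.1.const_mul a
  · rw [e, integral_const_mul, hF.2]; ring

theorem SymInt.zero : SymInt (fun _ => 0) 0 := by
  constructor <;> simp

theorem SymInt.congr {F G : ℝ → ℂ} {c : ℂ} (hF : SymInt F c) (h : F =ᵐ[volume] G) :
    SymInt G c := by
  have h2 : ∀ᵐ ω : ℝ, F (-ω) = G (-ω) :=
    (Measure.measurePreserving_neg (volume : Measure ℝ)).quasiMeasurePreserving.ae h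
  have e : (fun ω : ℝ => F ω + F (-ω)) =ᵐ[volume] fun ω => G ω + G (-ω) := by
    filter_upwards [h, h2] with ω h1 h2
    rw [h1, h2]
  exact ⟨hF.1.congr e, by rw [← integral_congr_ae e, hF.2]⟩

theorem SymInt.sum {ι : Type*} (s : Finset ι) {F : ι → ℝ → ℂ} {c : ι → ℂ}
    (h : ∀ i ∈ s, SymInt (F i) (c i)) :
    SymInt (fun ω => ∑ i ∈ s, F i ω) (∑ i ∈ s, c i) := by
  classical
  induction s using Finset.induction_on with
  | empty => simpa using SymInt.zero
  | insert a s ha ih =>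
    simp only [Finset.sum_insert ha]
    exact (h a (by simp)).add (ih fun i hi => h i (by simp [hi]))

theorem e_re (l : ℂ) (ω : ℝ) : ((ω : ℂ) * Complex.I - l).re = -l.re := by simp
theorem e_im (l : ℂ) (ω : ℝ) : ((ω : ℂ) * Complex.I - l).im = ω - l.im := by simp

theorem e_ne {l : ℂ} (hl : l.re < 0) (ω : ℝ) : (ω : ℂ) * Complex.I - l ≠ 0 := by
  intro h
  have := congrArg Complex.re h
  rw [e_re] at this
  simp at this; linarith

theorem e_slit {l : ℂ} (hl : l.re < 0) (ω : ℝ) : (ω : ℂ) * Complex.I - l ∈ Complex.slitPlane := by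
  left; rw [e_re]; linarith

theorem e_norm_sq (l : ℂ) (ω : ℝ) : ‖(ω : ℂ) * Complex.I - l‖ ^ 2 = l.re ^ 2 + (ω - l.im) ^ 2 := by
  rw [← Complex.normSq_eq_norm_sq, Complex.normSq_apply, e_re, e_im]; ring

theorem e_norm_ge {l : ℂ} (ω : ℝ) : -l.re ≤ ‖(ω : ℂ) * Complex.I - l‖ := by
  have := Complex.re_le_norm ((ω : ℂ) * Complex.I - l)
  rwa [e_re] at this

theorem e_cont (l : ℂ) : Continuous (fun ω : ℝ => (ω : ℂ) * Complex.I - l) := by fun_prop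

theorem e_int {l : ℂ} (hl : l.re < 0) :
    Integrable (fun ω : ℝ => (‖(ω : ℂ) * Complex.I - l‖ ^ 2)⁻¹) := by
  have h1 := (integrable_inv_one_add_sq.comp_div (ne_of_lt hl)).comp_sub_right l.im
  refine (h1.const_mul ((l.re ^ 2)⁻¹)).congr (Eventually.of_forall fun ω => ?_)
  simp only [e_norm_sq]
  have : l.re ≠ 0 := ne_of_lt hl
  rw [← mul_inv]
  congr 1
  field_simp

theorem e_tendsto_norm (l : ℂ) :
    Tendsto (fun ω : ℝ => ‖(ω : ℂ) * Complex.I - l‖) (cocompact ℝ) atTop := by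
  have h : Tendsto (fun ω : ℝ => ‖ω‖ - ‖l‖) (cocompact ℝ) atTop :=
    tendsto_atTop_add_const_right _ _ (tendsto_norm_cocompact_atTop)
  refine tendsto_atTop_mono (fun ω => ?_) h
  have := norm_sub_norm_le ((ω : ℂ) * Complex.I) l
  simpa using this

theorem e_hasDeriv (l : ℂ) (ω : ℝ) :
    HasDerivAt (fun ω : ℝ => (ω : ℂ) * Complex.I - l) Complex.I ω := by
  have := ((Complex.ofRealCLM.hasDerivAt (x := ω)).mul_const Complex.I).sub_const l
  simpa using this

theorem symInt_pow {l : ℂ} (hl : l.re < 0) (k : ℕ) :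
    SymInt (fun ω : ℝ => (((ω : ℂ) * Complex.I - l) ^ (k + 2))⁻¹) 0 := by
  have hi : Integrable (fun ω : ℝ => (((ω : ℂ) * Complex.I - l) ^ (k + 2))⁻¹) := by
    refine ((e_int hl).const_mul (((-l.re) ^ k)⁻¹)).mono' ?_ (Eventually.of_forall fun ω => ?_)
    · exact (((e_cont l).pow _).inv₀ fun ω => pow_ne_zero _ (e_ne hl ω)).aestronglyMeasurable
    · rw [norm_inv, norm_pow, pow_add, mul_inv]
      gcongr
      · have : 0 < -l.re := by linarith
        positivity
      · linarith
      · exact e_norm_ge ω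
  have hz : ∫ ω : ℝ, (((ω : ℂ) * Complex.I - l) ^ (k + 2))⁻¹ = 0 := by
    have hd : ∀ ω : ℝ, HasDerivAt
        (fun ω : ℝ => Complex.I * ((k : ℂ) + 1)⁻¹ * (((ω : ℂ) * Complex.I - l) ^ (k + 1))⁻¹)
        ((((ω : ℂ) * Complex.I - l) ^ (k + 2))⁻¹) ω := by
      intro ω
      have h := (((e_hasDeriv l ω).fun_pow (k + 1)).fun_inv
        (pow_ne_zero _ (e_ne hl ω))).const_mul (Complex.I * ((k : ℂ) + 1)⁻¹)
      refine h.congr_deriv ?_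
      have h0 := e_ne hl ω
      have hk : (k : ℂ) + 1 ≠ 0 := by exact_mod_cast Nat.succ_ne_zero k
      generalize (ω : ℂ) * Complex.I - l = z at *
      push_cast
      field_simp
      simp [Complex.I_sq]
      try ring
    have ht : Tendsto (fun ω : ℝ => Complex.I * ((k : ℂ) + 1)⁻¹ *
        (((ω : ℂ) * Complex.I - l) ^ (k + 1))⁻¹) (cocompact ℝ) (𝓝 0) := by
      rw [← mul_zero (Complex.I * ((k : ℂ) + 1)⁻¹)]
      refine Tendsto.const_mul _ ?_
      rw [tendsto_zero_iff_norm_tendsto_zero]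
      simp only [norm_inv, norm_pow]
      exact tendsto_inv_atTop_zero.comp
        ((tendsto_pow_atTop (Nat.succ_ne_zero k)).comp (e_tendsto_norm l))
    rw [integral_of_hasDerivAt_of_tendsto hd hi (ht.mono_left atBot_le_cocompact)
      (ht.mono_left atTop_le_cocompact), sub_zero]
  refine ⟨hi.add hi.comp_neg, ?_⟩
  rw [integral_add hi hi.comp_neg, integral_neg_eq_self
    (fun ω : ℝ => (((ω : ℂ) * Complex.I - l) ^ (k + 2))⁻¹), hz]
  simp

theorem symInt_one {l : ℂ} (hl : l.re < 0) :
    SymInt (fun ω : ℝ => ((ω : ℂ) * Complex.I - l)⁻¹) 1 := by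
  have hc1 : Continuous (fun ω : ℝ => ((ω : ℂ) * Complex.I - l)⁻¹) :=
    (e_cont l).inv₀ (e_ne hl)
  have hi : Integrable (fun ω : ℝ => ((ω : ℂ) * Complex.I - l)⁻¹ +
      (((-ω : ℝ) : ℂ) * Complex.I - l)⁻¹) := by
    refine (((e_int hl).add (e_int hl).comp_neg).const_mul (‖l‖)).mono' ?_
      (Eventually.of_forall fun ω => ?_)
    · exact (hc1.add (hc1.comp continuous_neg)).aestronglyMeasurable
    · have h1 := e_ne hl ω
      have h2 := e_ne hl (-ω)
      have : ((ω : ℂ) * Complex.I - l)⁻¹ + (((-ω : ℝ) : ℂ) * Complex.I - l)⁻¹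
          = -2 * l * (((ω : ℂ) * Complex.I - l)⁻¹ * (((-ω : ℝ) : ℂ) * Complex.I - l)⁻¹) := by
        have h3 : ((ω : ℂ) * Complex.I - l) + (((-ω : ℝ) : ℂ) * Complex.I - l) = -2 * l := by
          push_cast; ring
        rw [← h3]
        generalize (ω : ℂ) * Complex.I - l = z at *
        generalize ((-ω : ℝ) : ℂ) * Complex.I - l = w at *
        field_simp
        ring
      rw [this]
      simp only [norm_mul, norm_neg, norm_inv, Complex.norm_ofNat, Pi.add_apply]
      set a := ‖(ω : ℂ) * Complex.I - l‖⁻¹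
      set b := ‖((-ω : ℝ) : ℂ) * Complex.I - l‖⁻¹
      rw [← inv_pow, ← inv_pow]
      nlinarith [mul_nonneg (norm_nonneg l) (sq_nonneg (a - b))]
  refine ⟨hi, ?_⟩
  have hd : ∀ ω : ℝ, HasDerivAt
      (fun ω : ℝ => Complex.I * (Complex.log (((-ω : ℝ) : ℂ) * Complex.I - l)
        - Complex.log ((ω : ℂ) * Complex.I - l)))
      (((ω : ℂ) * Complex.I - l)⁻¹ + (((-ω : ℝ) : ℂ) * Complex.I - l)⁻¹) ω := by
    intro ω
    have h1 := (e_hasDeriv l ω).clog_real (e_slit hl ω)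
    have h2' : HasDerivAt (fun ω : ℝ => ((-ω : ℝ) : ℂ) * Complex.I - l) (-Complex.I) ω := by
      have := (e_hasDeriv l (-ω)).scomp ω (hasDerivAt_neg ω)
      simpa [Function.comp_def] using this
    have h2 := h2'.clog_real (e_slit hl (-ω))
    refine ((h2.sub h1).const_mul Complex.I).congr_deriv ?_
    simp only [div_eq_mul_inv]
    linear_combination -(((ω : ℂ) * Complex.I - l)⁻¹ + (((-ω : ℝ) : ℂ) * Complex.I - l)⁻¹) *
      Complex.I_sq
  have ht : Tendsto (fun ω : ℝ => Complex.I * (Complex.log (((-ω : ℝ) : ℂ) * Complex.I - l)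
        - Complex.log ((ω : ℂ) * Complex.I - l))) atTop (𝓝 (Real.pi : ℂ)) := by
    have hl0 : Tendsto (fun ω : ℝ => l * ((ω⁻¹ : ℝ) : ℂ)) atTop (𝓝 0) := by
      have := ((Complex.continuous_ofReal.tendsto 0).comp tendsto_inv_atTop_zero).const_mul l
      simpa using this
    have hA : Tendsto (fun ω : ℝ => Complex.log (-Complex.I - l * ((ω⁻¹ : ℝ) : ℂ))) atTop
        (𝓝 (Complex.log (-Complex.I))) := by
      have := (hl0.const_sub (-Complex.I)).clog (by simp [Complex.slitPlane])
      simpa using this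
    have hB : Tendsto (fun ω : ℝ => Complex.log (Complex.I - l * ((ω⁻¹ : ℝ) : ℂ))) atTop
        (𝓝 (Complex.log (Complex.I))) := by
      have := (hl0.const_sub (Complex.I)).clog (by simp [Complex.slitPlane])
      simpa using this
    have hAB := (hA.sub hB).const_mul Complex.I
    have e : Complex.I * (Complex.log (-Complex.I) - Complex.log Complex.I) = Real.pi := by
      rw [Complex.log_neg_I, Complex.log_I]
      linear_combination (-Real.pi : ℂ) * Complex.I_sq
    rw [e] at hAB
    refine hAB.congr' ?_
    filter_upwards [eventually_gt_atTop 0] with ω hω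
    have hω' : (ω : ℂ) ≠ 0 := by exact_mod_cast hω.ne'
    have e1 : ((-ω : ℝ) : ℂ) * Complex.I - l = (ω : ℂ) * (-Complex.I - l * ((ω⁻¹ : ℝ) : ℂ)) := by
      push_cast; field_simp
    have e2 : (ω : ℂ) * Complex.I - l = (ω : ℂ) * (Complex.I - l * ((ω⁻¹ : ℝ) : ℂ)) := by
      push_cast; field_simp
    have n1 := e_ne hl (-ω)
    have n2 := e_ne hl ω
    rw [e1] at n1 ⊢
    rw [e2] at n2 ⊢
    rw [Complex.log_ofReal_mul hω (right_ne_zero_of_mul n1),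
      Complex.log_ofReal_mul hω (right_ne_zero_of_mul n2)]
    ring
  have ht' : Tendsto (fun ω : ℝ => Complex.I * (Complex.log (((-ω : ℝ) : ℂ) * Complex.I - l)
        - Complex.log ((ω : ℂ) * Complex.I - l))) atBot (𝓝 (-Real.pi : ℂ)) := by
    refine (ht.comp tendsto_neg_atBot_atTop).neg.congr fun ω => ?_
    simp only [Function.comp_apply, neg_neg]
    ring
  rw [integral_of_hasDerivAt_of_tendsto hd hi ht' ht]
  ring

theorem ae_ne_of_finite {s : Set ℂ} (hs : s.Finite) : ∀ᵐ ω : ℝ, (ω : ℂ) * Complex.I ∉ s := by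
  have : ((fun ω : ℝ => (ω : ℂ) * Complex.I) ⁻¹' s).Finite := by
    refine hs.preimage (Function.Injective.injOn fun a b h => ?_)
    simpa using h
  exact (this.measure_zero volume) |> measure_eq_zero_iff_ae_notMem.mp

section
variable {n : ℕ}

noncomputable def Res (M : Matrix (Fin n) (Fin n) ℂ) (s : ℂ) : Matrix (Fin n) (Fin n) ℂ :=
  (s • (1 : Matrix (Fin n) (Fin n) ℂ) - M)⁻¹

theorem isUnit_of_notMem (M : Matrix (Fin n) (Fin n) ℂ) {s : ℂ} (h : s ∉ spectrum ℂ M) :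
    IsUnit (s • (1 : Matrix (Fin n) (Fin n) ℂ) - M).det := by
  rw [spectrum.notMem_iff, Algebra.algebraMap_eq_smul_one] at h
  exact (Matrix.isUnit_iff_isUnit_det _).mp h

theorem ae_notMem_spectrum (M : Matrix (Fin n) (Fin n) ℂ) :
    ∀ᵐ ω : ℝ, (ω : ℂ) * Complex.I ∉ spectrum ℂ M :=
  ae_ne_of_finite (Matrix.finite_spectrum M)

theorem res_rec (M : Matrix (Fin n) (Fin n) ℂ) {s l : ℂ} (h : s ∉ spectrum ℂ M) (hl : s ≠ l)
    (v : Fin n → ℂ) :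
    Res M s *ᵥ v = (s - l)⁻¹ • v + (s - l)⁻¹ • (Res M s *ᵥ (M *ᵥ v - l • v)) := by
  have hu := isUnit_of_notMem M h
  have h1 : Res M s *ᵥ ((s • (1 : Matrix (Fin n) (Fin n) ℂ) - M) *ᵥ v) = v := by
    rw [Res, Matrix.mulVec_mulVec, Matrix.nonsing_inv_mul _ hu, Matrix.one_mulVec]
  have h2 : (s • (1 : Matrix (Fin n) (Fin n) ℂ) - M) *ᵥ v = (s - l) • v - (M *ᵥ v - l • v) := by
    rw [Matrix.sub_mulVec, Matrix.smul_mulVec, Matrix.one_mulVec, sub_smul]; abel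
  rw [h2, Matrix.mulVec_sub, Matrix.mulVec_smul] at h1
  have h3 : s - l ≠ 0 := sub_ne_zero.mpr hl
  rw [← smul_add, eq_inv_smul_iff₀ h3]
  nth_rewrite 2 [← h1]
  abel

theorem mem_gen_succ (M : Matrix (Fin n) (Fin n) ℂ) (l : ℂ) (k : ℕ) (v : Fin n → ℂ)
    (hv : v ∈ Module.End.genEigenspace (Matrix.toLin' M) l ((k + 1 : ℕ) : ℕ∞)) :
    M *ᵥ v - l • v ∈ Module.End.genEigenspace (Matrix.toLin' M) l (k : ℕ∞) := by
  rw [Module.End.mem_genEigenspace_nat, LinearMap.mem_ker] at hv ⊢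
  rw [pow_succ, Module.End.mul_apply] at hv
  simpa using hv

theorem stable_gen (M : Matrix (Fin n) (Fin n) ℂ) {l : ℂ} (hl : l.re < 0) (x : Fin n → ℂ) (k : ℕ) :
    ∀ v ∈ Module.End.genEigenspace (Matrix.toLin' M) l (k : ℕ∞), ∀ j : ℕ,
      SymInt (fun ω : ℝ => (((ω : ℂ) * Complex.I - l) ^ j)⁻¹ * (x ⬝ᵥ (Res M (ω * Complex.I) *ᵥ v)))
        (if j = 0 then x ⬝ᵥ v else 0) := by
  induction k with
  | zero =>
    intro v hv j
    have : v = 0 := by simpa using hv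
    subst this
    simpa using SymInt.zero
  | succ k ih =>
    intro v hv j
    have h1 := ih _ (mem_gen_succ M l k v hv) (j + 1)
    have h2 : SymInt (fun ω : ℝ => (x ⬝ᵥ v) * (((ω : ℂ) * Complex.I - l) ^ (j + 1))⁻¹)
        ((x ⬝ᵥ v) * (if j = 0 then 1 else 0)) := by
      refine SymInt.const_mul ?_ _
      cases j with
      | zero => simpa using symInt_one hl
      | succ j => simpa using symInt_pow hl j
    have h3 := h2.add h1
    have e : (x ⬝ᵥ v) * (if j = 0 then 1 else 0) + (if j + 1 = 0 then
      x ⬝ᵥ (M *ᵥ v - l • v) else 0) = if j = 0 then x ⬝ᵥ v else 0 := by simp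
    rw [e] at h3
    refine h3.congr ?_
    filter_upwards [ae_notMem_spectrum M] with ω hω
    have hne := e_ne hl ω
    rw [res_rec M hω (sub_ne_zero.mp hne) v, dotProduct_add, dotProduct_smul, dotProduct_smul,
      pow_succ, mul_inv, smul_eq_mul, smul_eq_mul]
    ring

theorem unstable_gen (M : Matrix (Fin n) (Fin n) ℂ) {l : ℂ} (x : Fin n → ℂ)
    (hx : ∀ v ∈ Module.End.maxGenEigenspace (Matrix.toLin' M) l, x ⬝ᵥ v = 0)
    {s : ℂ} (h : s ∉ spectrum ℂ M) (hs : s ≠ l) (k : ℕ) :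
    ∀ v ∈ Module.End.genEigenspace (Matrix.toLin' M) l (k : ℕ∞), x ⬝ᵥ (Res M s *ᵥ v) = 0 := by
  induction k with
  | zero =>
    intro v hv
    have : v = 0 := by simpa using hv
    simp [this]
  | succ k ih =>
    intro v hv
    rw [res_rec M h hs v, dotProduct_add, dotProduct_smul, dotProduct_smul,
      ih _ (mem_gen_succ M l k v hv), hx v ?_]
    · simp
    · exact (Module.End.genEigenspace (Matrix.toLin' M) l).monotone le_top hv

def goodSub (M : Matrix (Fin n) (Fin n) ℂ) (x : Fin n → ℂ) : Submodule ℂ (Fin n → ℂ) where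
  carrier := {v | SymInt (fun ω : ℝ => x ⬝ᵥ (Res M (ω * Complex.I) *ᵥ v)) (x ⬝ᵥ v)}
  add_mem' := by
    intro a b ha hb
    have := SymInt.add ha hb
    simpa [Matrix.mulVec_add, dotProduct_add] using this
  zero_mem' := by simpa using SymInt.zero
  smul_mem' := by
    intro c a ha
    have := SymInt.const_mul ha c
    simpa [Matrix.mulVec_smul, dotProduct_smul] using this

theorem goodSub_top (M : Matrix (Fin n) (Fin n) ℂ) (x : Fin n → ℂ)
    (hx : ∀ l : ℂ, 0 ≤ l.re → ∀ v ∈ Module.End.maxGenEigenspace (Matrix.toLin' M) l, x ⬝ᵥ v = 0) :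
    goodSub M x = ⊤ := by
  rw [eq_top_iff, ← Module.End.iSup_maxGenEigenspace_eq_top (Matrix.toLin' M)]
  refine iSup_le fun l v hv => ?_
  have hv' := hv
  rw [Module.End.mem_maxGenEigenspace] at hv'
  obtain ⟨k, hk⟩ := hv'
  have hk' : v ∈ Module.End.genEigenspace (Matrix.toLin' M) l (k : ℕ∞) := by
    rw [Module.End.mem_genEigenspace_nat]; exact hk
  change SymInt _ _
  rcases lt_or_ge l.re 0 with h | h
  · simpa using stable_gen M h x k v hk' 0
  · rw [hx l h v hv]
    refine SymInt.zero.congr ?_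
    filter_upwards [ae_notMem_spectrum M, ae_ne_of_finite (Set.finite_singleton l)] with ω h1 h2
    exact (unstable_gen M x (hx l h) h1 h2 k v hk').symm

theorem cplx_mul {a b c : ℕ} (M : Matrix (Fin a) (Fin b) ℝ) (N : Matrix (Fin b) (Fin c) ℝ) :
    cplx (M * N) = cplx M * cplx N := Matrix.map_mul (f := Complex.ofRealHom)

theorem cplx_transpose {a b : ℕ} (M : Matrix (Fin a) (Fin b) ℝ) :
    cplx Mᵀ = (cplx M)ᵀ := rfl

theorem lyap_id {p : ℕ} (A X : Matrix (Fin n) (Fin n) ℂ) (C : Matrix (Fin p) (Fin n) ℂ)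
    (hLyap : Aᵀ * X + X * A + Cᵀ * C = 0) {s : ℂ}
    (h1 : s ∉ spectrum ℂ A) (h2 : -s ∉ spectrum ℂ A) :
    (Res A (-s))ᵀ * (Cᵀ * C) * Res A s = X * Res A s + (Res A (-s))ᵀ * X := by
  have hC : Cᵀ * C = ((-s) • (1 : Matrix (Fin n) (Fin n) ℂ) - A)ᵀ * X
      + X * (s • (1 : Matrix (Fin n) (Fin n) ℂ) - A) := by
    have : Cᵀ * C = -(Aᵀ * X + X * A) := (neg_eq_of_add_eq_zero_right hLyap).symm
    rw [this]
    simp [Matrix.sub_mul, Matrix.mul_sub]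
    abel
  have e1 : (s • (1 : Matrix (Fin n) (Fin n) ℂ) - A) * Res A s = 1 :=
    Matrix.mul_nonsing_inv _ (isUnit_of_notMem A h1)
  have e2 : (Res A (-s))ᵀ * ((-s) • (1 : Matrix (Fin n) (Fin n) ℂ) - A)ᵀ = 1 := by
    rw [← Matrix.transpose_mul, Res, Matrix.mul_nonsing_inv _ (isUnit_of_notMem A h2),
      Matrix.transpose_one]
  rw [hC, Matrix.mul_add, Matrix.add_mul, ← Matrix.mul_assoc, e2, Matrix.one_mul, ← Matrix.mul_assoc,
    Matrix.mul_assoc ((Res A (-s))ᵀ * X), e1, Matrix.mul_one]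

end

/-- the H₂-norm of `S(s) = C(sI − A)⁻¹B` equals `tr(BᵀXB)` for the
distinguished PSD solution `X` of the Lyapunov equation. -/
theorem stmt1 {n m p : ℕ} (A : Matrix (Fin n) (Fin n) ℝ) (B : Matrix (Fin n) (Fin m) ℝ)
    (C : Matrix (Fin p) (Fin n) ℝ)
    (hC : unstableSubspace A ≤ LinearMap.ker (Matrix.toLin' (cplx C)))
    (X : Matrix (Fin n) (Fin n) ℝ) (hXsymm : X.IsSymm) (hXpsd : X.PosSemidef)
    (hLyap : Aᵀ * X + X * A + Cᵀ * C = 0)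
    (hXker : unstableSubspace A ≤ LinearMap.ker (Matrix.toLin' (cplx X))) :
    H2normSq (transfer A B C) = (Bᵀ * X * B).trace := by
  have hL : (cplx A)ᵀ * cplx X + cplx X * cplx A + (cplx C)ᵀ * cplx C = 0 := by
    simp only [← cplx_transpose, ← cplx_mul]
    have := congrArg cplx hLyap
    ext i j
    have := congrFun (congrFun this i) j
    simpa [cplx] using this
  have hXs : (cplx X)ᵀ = cplx X := by rw [← cplx_transpose, hXsymm.eq]
  set a := cplx A with ha
  set b := cplx B with hb
  set c := cplx C with hc
  set x := cplx X with hx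
  have hker : ∀ l : ℂ, 0 ≤ l.re → ∀ v ∈ Module.End.maxGenEigenspace (Matrix.toLin' a) l,
      x *ᵥ v = 0 := by
    intro l hl v hv
    have h1 : v ∈ unstableSubspace A :=
      (le_iSup₂_of_le (f := fun (μ : ℂ) (_ : μ ∈ {μ : ℂ | 0 ≤ μ.re}) =>
        Module.End.maxGenEigenspace (Matrix.toLin' (cplx A)) μ) l hl le_rfl) hv
    simpa using hXker h1
  have hcol : ∀ j : Fin m, SymInt (fun ω : ℝ => (bᵀ * x * Res a (ω * Complex.I) * b) j j)
      ((bᵀ * x * b) j j) := by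
    intro j
    have hg := goodSub_top a ((bᵀ * x) j) (by
      intro l hl v hv
      have h := congrFun (Matrix.mulVec_mulVec v bᵀ x) j
      rw [hker l hl v hv, Matrix.mulVec_zero] at h
      exact h.symm)
    have hmem : (fun i => b i j) ∈ goodSub a ((bᵀ * x) j) := by rw [hg]; trivial
    have h : SymInt _ _ := hmem
    convert h using 2 with ω
    · rw [Matrix.mul_assoc]
      rfl
    · rfl
  have htr := SymInt.sum Finset.univ (fun j _ => hcol j)
  change SymInt (fun ω : ℝ => (bᵀ * x * Res a (ω * Complex.I) * b).trace) ((bᵀ * x * b).trace) at htr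
  have hae : (fun ω : ℝ => ((transfer A B C (-((ω : ℂ) * Complex.I)))ᵀ *
      transfer A B C ((ω : ℂ) * Complex.I)).trace) =ᵐ[volume]
      fun ω : ℝ => (bᵀ * x * Res a (ω * Complex.I) * b).trace +
        (bᵀ * x * Res a ((-ω : ℝ) * Complex.I) * b).trace := by
    have h2 : ∀ᵐ ω : ℝ, ((-ω : ℝ) : ℂ) * Complex.I ∉ spectrum ℂ a :=
      (Measure.measurePreserving_neg (volume : Measure ℝ)).quasiMeasurePreserving.ae (ae_notMem_spectrum a)
    filter_upwards [ae_notMem_spectrum a, h2] with ω h1 h2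
    have en : ((-ω : ℝ) : ℂ) * Complex.I = -((ω : ℂ) * Complex.I) := by push_cast; ring
    rw [en] at h2 ⊢
    have hid := lyap_id a x c hL h1 h2
    have e1 : (transfer A B C (-((ω : ℂ) * Complex.I)))ᵀ * transfer A B C ((ω : ℂ) * Complex.I)
        = bᵀ * ((Res a (-((ω : ℂ) * Complex.I)))ᵀ * (cᵀ * c) * Res a ((ω : ℂ) * Complex.I)) * b := by
      change (c * Res a _ * b)ᵀ * (c * Res a _ * b) = _
      simp only [Matrix.transpose_mul, Matrix.mul_assoc]
    rw [e1, hid, Matrix.mul_add, Matrix.add_mul, Matrix.trace_add]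
    congr 1
    · simp only [Matrix.mul_assoc]
    · rw [← Matrix.trace_transpose]
      simp only [Matrix.transpose_mul, Matrix.transpose_transpose, hXs, Matrix.mul_assoc]
  have hfin : (bᵀ * x * b).trace = (((Bᵀ * X * B).trace : ℝ) : ℂ) := by
    rw [hb, hx, ← cplx_transpose, ← cplx_mul, ← cplx_mul]
    simp [Matrix.trace, cplx]
  unfold H2normSq
  have hint := htr.1.congr hae.symm
  have h1 := Complex.reCLM.integral_comp_comm hint
  simp only [Complex.reCLM_apply] at h1
  rw [h1, integral_congr_ae hae, htr.2, hfin]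
  have : (2 * (Real.pi : ℂ) * (((Bᵀ * X * B).trace : ℝ) : ℂ)).re = 2 * Real.pi * (Bᵀ * X * B).trace := by
    rw [← Complex.ofReal_ofNat, ← Complex.ofReal_mul, ← Complex.ofReal_mul, Complex.ofReal_re]
  rw [this]
  have := Real.pi_ne_zero
  field_simp
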